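/- Let (X, Y) be jointly distributed random variables with X ∈ ℝ^d, let r > 0 and 0 < δ < 1, and suppose that drawing X̂ from the conditional law of X given Y (conditionally independent of X given Y) yields P[ ‖X − X̂‖ ≤ r ] ≥ 1 − δ. Let Z = X + ε where ε ~ N(0, σ² I_d) is independent of (X, Y). If σ ≥ r/(2δ), then drawing X̂ from the conditional law of X given (Y, Z) (conditionally independent of X given (Y, Z)) yields P[ ‖X − X̂‖ ≤ r ] ≥ 1 − 3δ. -/

import Mathlib

open MeasureTheory ProbabilityTheory

/-- The density of the isotropic Gaussian `N(0, σ² I_d)` on `ℝ^d`. -/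
noncomputable def gaussDensity (d : ℕ) (σ2 : ℝ) (x : EuclideanSpace ℝ (Fin d)) : ℝ :=
  (2 * Real.pi * σ2) ^ (-(d : ℝ) / 2) * Real.exp (-‖x‖ ^ 2 / (2 * σ2))

/-- The isotropic Gaussian measure `N(0, σ² I_d)` on `ℝ^d`. -/
noncomputable def gaussMeasure (d : ℕ) (σ2 : ℝ) : Measure (EuclideanSpace ℝ (Fin d)) :=
  volume.withDensity fun x => ENNReal.ofReal (gaussDensity d σ2 x)

open scoped ENNReal

lemma gauss_pointwise (g p q s t : ℝ) (g0 : 0 ≤ g) (g1 : g ≤ 1) (p0 : 0 ≤ p) (q0 : 0 ≤ q) (s0 : 0 ≤ s)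
    (hs : s ^ 2 = p * q) (ht : 0 < t) :
    g * p ≤ g * q + (1/2) * p - (1/2) * q + (1/4) * (t * (p + q - 2 * s) + t⁻¹ * (p + q + 2 * s)) := by
  have hA : 0 ≤ p + q - 2 * s := by nlinarith [sq_nonneg (p - q), sq_nonneg (p+q-2*s)]
  have hB : 0 ≤ p + q + 2 * s := by positivity
  have hAB : (p + q - 2 * s) * (p + q + 2 * s) = (p - q) ^ 2 := by linear_combination (-4) * hs
  set A := p + q - 2 * s
  set B := p + q + 2 * s
  have ht' : 0 < t⁻¹ := by positivity
  have htt : t * t⁻¹ = 1 := mul_inv_cancel₀ ht.ne'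
  have h2 : 2 * |p - q| ≤ t * A + t⁻¹ * B := by
    apply abs_le_of_sq_le_sq' _ (by positivity) |>.2
    have : (2 * |p - q|) ^ 2 = 4 * ((t * A) * (t⁻¹ * B)) := by
      rw [mul_pow, sq_abs, ← hAB]; linear_combination (-4 * A * B) * htt
    rw [this]; nlinarith [sq_nonneg (t * A - t⁻¹ * B)]
  have h3 : (g - 1/2) * (p - q) ≤ 1/2 * |p - q| := by
    calc _ ≤ |(g - 1/2) * (p - q)| := le_abs_self _
      _ = |g - 1/2| * |p - q| := abs_mul _ _
      _ ≤ _ := by gcongr; rw [abs_le]; constructor <;> linarith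
  linarith

lemma gaussDensity_nonneg (d : ℕ) (σ : ℝ) (x) : 0 ≤ gaussDensity d (σ ^ 2) x := by
  unfold gaussDensity; positivity

lemma gaussDensity_cont (d : ℕ) (σ : ℝ) : Continuous (gaussDensity d (σ ^ 2)) := by
  unfold gaussDensity; fun_prop

lemma gaussDensity_mid (d : ℕ) (σ : ℝ) (hσ : 0 < σ) (a e : EuclideanSpace ℝ (Fin d)) :
    (Real.exp (-‖a‖ ^ 2 / (8 * σ ^ 2)) * gaussDensity d (σ ^ 2) (e - (1/2 : ℝ) • a)) ^ 2
      = gaussDensity d (σ ^ 2) (e - a) * gaussDensity d (σ ^ 2) e := by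
  have h1 : ‖e - a‖ ^ 2 = ‖e‖ ^ 2 - 2 * inner ℝ e a + ‖a‖ ^ 2 := norm_sub_sq_real e a
  have h2 : ‖e - (1/2 : ℝ) • a‖ ^ 2 = ‖e‖ ^ 2 - inner ℝ e a + ‖a‖ ^ 2 / 4 := by
    rw [norm_sub_sq_real, inner_smul_right, norm_smul]; norm_num; ring
  unfold gaussDensity
  rw [h1, h2]
  set C := (2 * Real.pi * σ ^ 2) ^ (-(d : ℝ) / 2)
  calc _ = C ^ 2 * (Real.exp (-‖a‖ ^ 2 / (8 * σ ^ 2)) * Real.exp (-(‖e‖ ^ 2 - inner ℝ e a + ‖a‖ ^ 2 / 4) / (2 * σ ^ 2))) ^ 2 := by ring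
    _ = C ^ 2 * (Real.exp (-(‖e‖ ^ 2 - 2 * inner ℝ e a + ‖a‖ ^ 2) / (2 * σ ^ 2)) * Real.exp (-‖e‖ ^ 2 / (2 * σ ^ 2))) := by
      rw [← Real.exp_add, ← Real.exp_add, sq (Real.exp _), ← Real.exp_add]
      congr 2; field_simp; ring
    _ = _ := by ring

lemma gauss_shift (d : ℕ) (σ r δ : ℝ) (hσ : 0 < σ) (hδ : 0 < δ) (hrσ : r ≤ 2 * δ * σ)
    (hprob : IsProbabilityMeasure (gaussMeasure d (σ ^ 2)))
    (a : EuclideanSpace ℝ (Fin d)) (ha : ‖a‖ ≤ r)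
    (g : EuclideanSpace ℝ (Fin d) → ℝ≥0∞) (hg : Measurable g) (hg1 : ∀ x, g x ≤ 1) :
    ∫⁻ e, g (e + a) ∂(gaussMeasure d (σ ^ 2)) ≤
      ∫⁻ e, g e ∂(gaussMeasure d (σ ^ 2)) + ENNReal.ofReal δ := by
  set ρ := gaussDensity d (σ ^ 2) with hρ
  have hρ0 : ∀ x, 0 ≤ ρ x := gaussDensity_nonneg d σ
  have hρc : Continuous ρ := gaussDensity_cont d σ
  have hρm := hρc.measurable
  have hρl : ∫⁻ x, ENNReal.ofReal (ρ x) = 1 := by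
    have := hprob.measure_univ
    rwa [gaussMeasure, withDensity_apply _ MeasurableSet.univ, setLIntegral_univ] at this
  have hρi : Integrable ρ := by
    refine ⟨hρc.aestronglyMeasurable, ?_⟩
    rw [hasFiniteIntegral_iff_ofReal (.of_forall hρ0), hρl]; simp
  have hρ1 : ∫ x, ρ x = 1 := by
    rw [integral_eq_lintegral_of_nonneg_ae (.of_forall hρ0) hρc.aestronglyMeasurable, hρl]; simp
  set g' := fun x => (g x).toReal
  have hg'm : Measurable g' := hg.ennreal_toReal
  have hg'0 : ∀ x, 0 ≤ g' x := fun x => ENNReal.toReal_nonneg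
  have hg'1 : ∀ x, g' x ≤ 1 := fun x => by
    have := ENNReal.toReal_mono ENNReal.one_ne_top (hg1 x); simpa using this
  have hgg : ∀ x, g x = ENNReal.ofReal (g' x) := fun x =>
    (ENNReal.ofReal_toReal ((hg1 x).trans_lt ENNReal.one_lt_top).ne).symm
  have hint : ∀ f : EuclideanSpace ℝ (Fin d) → ℝ, Integrable f → Integrable (fun x => g' x * f x) :=
    fun f hf => hf.bdd_mul (c := 1) hg'm.aestronglyMeasurable
      (.of_forall fun x => by rw [Real.norm_of_nonneg (hg'0 x)]; exact hg'1 x)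
  have hpi : ∀ b, Integrable (fun x => ρ (x - b)) := fun b => hρi.comp_sub_right b
  have hp1 : ∀ b, ∫ x, ρ (x - b) = 1 := fun b => by rw [integral_sub_right_eq_self ρ b, hρ1]
  have e2 : ∫⁻ e, g e ∂(gaussMeasure d (σ ^ 2)) = ENNReal.ofReal (∫ x, g' x * ρ x) := by
    rw [gaussMeasure, lintegral_withDensity_eq_lintegral_mul _ hρm.ennreal_ofReal hg,
      ofReal_integral_eq_lintegral_ofReal (hint _ hρi) (.of_forall fun x => mul_nonneg (hg'0 x) (hρ0 x))]
    refine lintegral_congr fun x => ?_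
    simp only [Pi.mul_apply]
    rw [hgg, ENNReal.ofReal_mul (hg'0 x), mul_comm]
  have e1 : ∫⁻ e, g (e + a) ∂(gaussMeasure d (σ ^ 2)) = ENNReal.ofReal (∫ x, g' x * ρ (x - a)) := by
    rw [gaussMeasure, lintegral_withDensity_eq_lintegral_mul _ hρm.ennreal_ofReal (by fun_prop),
      ofReal_integral_eq_lintegral_ofReal (hint _ (hpi a)) (.of_forall fun x => mul_nonneg (hg'0 x) (hρ0 _)),
      ← lintegral_add_right_eq_self (fun x => ENNReal.ofReal (g' x * ρ (x - a))) a]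
    refine lintegral_congr fun x => ?_
    simp only [Pi.mul_apply]
    rw [hgg, ENNReal.ofReal_mul (hg'0 _), mul_comm, add_sub_cancel_right]
  rw [e1, e2, ← ENNReal.ofReal_add (integral_nonneg fun x => mul_nonneg (hg'0 x) (hρ0 x)) hδ.le]
  apply ENNReal.ofReal_le_ofReal
  set c := Real.exp (-‖a‖ ^ 2 / (8 * σ ^ 2)) with hc
  have hc0 : 0 < c := Real.exp_pos _
  have hc2 : 1 - δ ^ 2 ≤ c ^ 2 := by
    have : c ^ 2 = Real.exp (-(‖a‖ ^ 2 / (4 * σ ^ 2))) := by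
      rw [hc, sq, ← Real.exp_add]; congr 1; field_simp; ring
    rw [this]
    have h1 := Real.add_one_le_exp (-(‖a‖ ^ 2 / (4 * σ ^ 2)))
    have h2 : ‖a‖ ^ 2 / (4 * σ ^ 2) ≤ δ ^ 2 := by
      rw [div_le_iff₀ (by positivity)]
      have : ‖a‖ ^ 2 ≤ (2 * δ * σ) ^ 2 := pow_le_pow_left₀ (norm_nonneg _) (ha.trans hrσ) 2
      linarith
    linarith
  set t := (1 + c) / δ with ht
  have ht0 : 0 < t := by positivity
  have key : ∫ x, g' x * ρ (x - a) ≤ ∫ x, ((g' x * ρ x) + ((1/2 + t/4 + t⁻¹/4) * ρ (x - a)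
      + (-1/2 + t/4 + t⁻¹/4) * ρ x + ((t⁻¹ - t) / 2 * c) * ρ (x - (1/2 : ℝ) • a))) := by
    apply integral_mono (hint _ (hpi a))
    · exact (hint _ hρi).add ((((hpi a).const_mul _).add (hρi.const_mul _)).add ((hpi _).const_mul _))
    · intro x
      have := gauss_pointwise (g' x) (ρ (x - a)) (ρ x) (c * ρ (x - (1/2 : ℝ) • a)) t (hg'0 x) (hg'1 x)
        (hρ0 _) (hρ0 _) (mul_nonneg hc0.le (hρ0 _)) (gaussDensity_mid d σ hσ a x) ht0
      simp only
      linarith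
  have i1 := (hpi a).const_mul (1/2 + t/4 + t⁻¹/4)
  have i2 := hρi.const_mul (-1/2 + t/4 + t⁻¹/4)
  have i3 := (hpi ((1/2 : ℝ) • a)).const_mul ((t⁻¹ - t) / 2 * c)
  have i12 := i1.add i2
  have i123 := i12.add i3
  simp only [Pi.add_def] at i12 i123
  rw [integral_add (hint _ hρi) i123, integral_add i12 i3, integral_add i1 i2,
    integral_const_mul, integral_const_mul, integral_const_mul, hp1, hp1, hρ1] at key
  have h5 : t * (1 - c) ≤ δ := by
    rw [ht, div_mul_eq_mul_div, div_le_iff₀ hδ]; nlinarith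
  have h6 : t⁻¹ * (1 + c) = δ := by
    rw [ht, inv_div]; field_simp
  linarith

/-- Suppose a fresh sample `X̂` from the conditional law of `X` given `Y`
satisfies `P[‖X − X̂‖ ≤ r] ≥ 1 − δ` (this probability being the expectation over `ω` of the
conditional-kernel mass of the ball of radius `r` around `X(ω)`).  Let `Z = X + ε` with
`ε ~ N(0, σ² I_d)` independent of `(X, Y)` and `σ ≥ r/(2δ)`.  Then a fresh sample `X̂` from
the conditional law of `X` given `(Y, Z)` satisfies `P[‖X − X̂‖ ≤ r] ≥ 1 − 3δ`. -/
theorem extra_gaussian_measurement_no_hurt (d : ℕ)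
    {Ω β : Type*} [MeasureSpace Ω] [IsProbabilityMeasure (ℙ : Measure Ω)]
    [MeasurableSpace β]
    (X : Ω → EuclideanSpace ℝ (Fin d)) (Y : Ω → β)
    (eps : Ω → EuclideanSpace ℝ (Fin d))
    (hX : Measurable X) (hY : Measurable Y) (heps : Measurable eps)
    (r δ σ : ℝ) (hr : 0 < r) (hδ0 : 0 < δ) (hδ1 : δ < 1)
    (hepslaw : Measure.map eps ℙ = gaussMeasure d (σ ^ 2))
    (hindep : IndepFun (fun ω => (X ω, Y ω)) eps ℙ)
    (Z : Ω → EuclideanSpace ℝ (Fin d)) (hZ : ∀ ω, Z ω = X ω + eps ω)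
    (h : ENNReal.ofReal (1 - δ) ≤
      ∫⁻ ω, (condDistrib X Y ℙ) (Y ω) {x' | ‖X ω - x'‖ ≤ r} ∂ℙ)
    (hσ : r / (2 * δ) ≤ σ) :
    ENNReal.ofReal (1 - 3 * δ) ≤
      ∫⁻ ω, (condDistrib X (fun ω' => (Y ω', Z ω')) ℙ) (Y ω, Z ω) {x' | ‖X ω - x'‖ ≤ r} ∂ℙ := by
  have hσ0 : 0 < σ := lt_of_lt_of_le (by positivity) hσ
  have hrσ : r ≤ 2 * δ * σ := by
    rw [div_le_iff₀ (by positivity)] at hσ; linarith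
  have hZm : Measurable Z := by
    have : Z = fun ω => X ω + eps ω := funext hZ
    rw [this]; fun_prop
  set ν := gaussMeasure d (σ ^ 2) with hν
  have hprob : IsProbabilityMeasure ν := hepslaw ▸ Measure.isProbabilityMeasure_map heps.aemeasurable
  set κ := condDistrib X Y ℙ with hκ
  set K := condDistrib X (fun ω' => (Y ω', Z ω')) ℙ with hK
  set PY := Measure.map Y ℙ with hPY
  have hPYp : IsProbabilityMeasure PY := Measure.isProbabilityMeasure_map hY.aemeasurable
  have hYX : PY ⊗ₘ κ = Measure.map (fun ω => (Y ω, X ω)) ℙ :=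
    compProd_map_condDistrib hX.aemeasurable
  have hYZX : (Measure.map (fun ω => (Y ω, Z ω)) ℙ) ⊗ₘ K
      = Measure.map (fun ω => ((Y ω, Z ω), X ω)) ℙ :=
    compProd_map_condDistrib hX.aemeasurable
  have hind' : Measure.map (fun ω => ((Y ω, X ω), eps ω)) ℙ = (PY ⊗ₘ κ).prod ν := by
    rw [hYX, ← hepslaw]
    exact (hindep.comp measurable_swap measurable_id).map_prod_eq_prod_map_map
      (by fun_prop) (by fun_prop)
  have joint : ∀ F : (β × EuclideanSpace ℝ (Fin d)) × EuclideanSpace ℝ (Fin d) → ℝ≥0∞, Measurable F →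
      ∫⁻ ω, F ((Y ω, X ω), eps ω) ∂ℙ = ∫⁻ y, ∫⁻ x, ∫⁻ e, F ((y, x), e) ∂ν ∂(κ y) ∂PY := by
    intro F hF
    rw [← lintegral_map (f := F) (g := fun ω => ((Y ω, X ω), eps ω)) hF (by fun_prop), hind',
      lintegral_prod _ hF.aemeasurable, Measure.lintegral_compProd hF.lintegral_prod_right']
  have hball : MeasurableSet {p : EuclideanSpace ℝ (Fin d) × EuclideanSpace ℝ (Fin d) | ‖p.1 - p.2‖ ≤ r} :=
    measurableSet_le (by fun_prop) (by fun_prop)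
  have hsymm : ∀ x : EuclideanSpace ℝ (Fin d), {x' | ‖x - x'‖ ≤ r} = {x' | ‖x' - x‖ ≤ r} := by
    intro x; ext x'; simp [norm_sub_rev]
  have hballx : ∀ x : EuclideanSpace ℝ (Fin d), MeasurableSet {x' | ‖x - x'‖ ≤ r} := fun x =>
    measurableSet_le (by fun_prop) (by fun_prop)
  let f : (β × EuclideanSpace ℝ (Fin d)) × EuclideanSpace ℝ (Fin d) → ℝ≥0∞ :=
    fun p => K p.1 {x' | ‖p.2 - x'‖ ≤ r}
  have hf : Measurable f := by
    have := Kernel.measurable_kernel_prodMk_left (κ := K.comap (Prod.fst : (β × EuclideanSpace ℝ (Fin d)) × EuclideanSpace ℝ (Fin d) → _) measurable_fst)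
      (t := {p | ‖p.1.2 - p.2‖ ≤ r}) (measurableSet_le (by fun_prop) (by fun_prop))
    exact this
  have hf1 : ∀ p, f p ≤ 1 := fun p => prob_le_one
  let k : β × EuclideanSpace ℝ (Fin d) → ℝ≥0∞ := fun p => κ p.1 {x' | ‖p.2 - x'‖ ≤ r}
  have hk : Measurable k := by
    have := Kernel.measurable_kernel_prodMk_left (κ := κ.comap (Prod.fst : β × EuclideanSpace ℝ (Fin d) → _) measurable_fst)
      (t := {p | ‖p.1.2 - p.2‖ ≤ r}) (measurableSet_le (by fun_prop) (by fun_prop))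
    exact this
  have hA : ∫⁻ ω, κ (Y ω) {x' | ‖X ω - x'‖ ≤ r} ∂ℙ
      = ∫⁻ ω, ∫⁻ x', f ((Y ω, Z ω), x') ∂(κ (Y ω)) ∂ℙ := by
    have hk' : Measurable (fun p : (β × EuclideanSpace ℝ (Fin d)) × EuclideanSpace ℝ (Fin d) => k (p.1.1, p.2)) := by
      fun_prop
    calc _ = ∫⁻ p, k (p.1.1, p.2) ∂(Measure.map (fun ω => ((Y ω, Z ω), X ω)) ℙ) := by
          rw [lintegral_map hk' (by fun_prop)]
      _ = ∫⁻ q, ∫⁻ x, k (q.1, x) ∂(K q) ∂(Measure.map (fun ω => (Y ω, Z ω)) ℙ) := by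
          rw [← hYZX, Measure.lintegral_compProd hk']
      _ = ∫⁻ ω, ∫⁻ x, k (Y ω, x) ∂(K (Y ω, Z ω)) ∂ℙ := by
          rw [lintegral_map (hk'.lintegral_kernel_prod_right') (by fun_prop)]
      _ = _ := by
          refine lintegral_congr fun ω => ?_
          have h1 : ((K (Y ω, Z ω)).prod (κ (Y ω))) {p | ‖p.1 - p.2‖ ≤ r}
              = ∫⁻ x, k (Y ω, x) ∂(K (Y ω, Z ω)) := Measure.prod_apply hball
          have h2 : ((K (Y ω, Z ω)).prod (κ (Y ω))) {p | ‖p.1 - p.2‖ ≤ r}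
              = ∫⁻ x', f ((Y ω, Z ω), x') ∂(κ (Y ω)) := by
            rw [Measure.prod_apply_symm hball]
            refine lintegral_congr fun x' => ?_
            simp only [f, hsymm]; rfl
          rw [← h1, h2]
  have hfk : Measurable (fun p : ((β × EuclideanSpace ℝ (Fin d)) × EuclideanSpace ℝ (Fin d)) × EuclideanSpace ℝ (Fin d) =>
      f ((p.1.1.1, p.1.1.2 + p.1.2), p.2)) := by fun_prop
  have hA2 : ∫⁻ ω, ∫⁻ x', f ((Y ω, Z ω), x') ∂(κ (Y ω)) ∂ℙ
      = ∫⁻ y, ∫⁻ x, ∫⁻ x', ∫⁻ e, f ((y, x + e), x') ∂ν ∂(κ y) ∂(κ y) ∂PY := by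
    have hm : Measurable (fun p : (β × EuclideanSpace ℝ (Fin d)) × EuclideanSpace ℝ (Fin d) =>
        ∫⁻ x', f ((p.1.1, p.1.2 + p.2), x') ∂(κ p.1.1)) :=
      Measurable.lintegral_kernel_prod_right' (κ := κ.comap (fun p : (β × EuclideanSpace ℝ (Fin d)) × EuclideanSpace ℝ (Fin d) => p.1.1) (by fun_prop)) hfk
    simp_rw [hZ]
    rw [joint _ hm]
    refine lintegral_congr fun y => lintegral_congr fun x => ?_
    apply lintegral_lintegral_swap (μ := ν) (ν := κ y) (f := fun e x' => f ((y, x + e), x'))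
    apply Measurable.aemeasurable
    simp only [Function.uncurry_def]
    fun_prop
  have hG : ∫⁻ ω, f ((Y ω, Z ω), X ω) ∂ℙ
      = ∫⁻ y, ∫⁻ x, ∫⁻ x', ∫⁻ e, f ((y, x' + e), x') ∂ν ∂(κ y) ∂(κ y) ∂PY := by
    simp_rw [hZ]
    rw [joint (fun p => f ((p.1.1, p.1.2 + p.2), p.1.2)) (by fun_prop)]
    refine lintegral_congr fun y => ?_
    rw [lintegral_const]; simp
  have hB : ∫⁻ ω, κ (Y ω) {x' | ‖X ω - x'‖ ≤ r} ∂ℙ = ∫⁻ y, ∫⁻ x, k (y, x) ∂(κ y) ∂PY := by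
    rw [← Measure.lintegral_compProd hk, hYX, lintegral_map hk (by fun_prop)]
  set A := ∫⁻ ω, κ (Y ω) {x' | ‖X ω - x'‖ ≤ r} ∂ℙ with hAdef
  change _ ≤ ∫⁻ ω, f ((Y ω, Z ω), X ω) ∂ℙ
  set G := ∫⁻ ω, f ((Y ω, Z ω), X ω) ∂ℙ with hGdef
  have pt : ∀ y x, ∫⁻ x', ∫⁻ e, f ((y, x + e), x') ∂ν ∂(κ y) + k (y, x) ≤
      ∫⁻ x', ∫⁻ e, f ((y, x' + e), x') ∂ν ∂(κ y) + (ENNReal.ofReal δ + 1) := by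
    intro y x
    have hs := hballx x
    have : k (y, x) = ∫⁻ x', Set.indicator {x' | ‖x - x'‖ ≤ r} 1 x' ∂(κ y) := by
      rw [lintegral_indicator_one hs]
    rw [this, ← lintegral_add_right _ (measurable_one.indicator hs)]
    have hc : ENNReal.ofReal δ + 1 = ∫⁻ x', (ENNReal.ofReal δ + 1) ∂(κ y) := by simp
    rw [hc, ← lintegral_add_right _ measurable_const]
    refine lintegral_mono fun x' => ?_
    by_cases hx : ‖x - x'‖ ≤ r
    · have h1 := gauss_shift d σ r δ hσ0 hδ0 hrσ hprob (x - x') hx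
        (fun e => f ((y, x' + e), x')) (by fun_prop) (fun e => hf1 _)
      have h2 : ∀ e, x' + (e + (x - x')) = x + e := fun e => by abel
      simp only [h2] at h1
      rw [Set.indicator_of_mem (by exact hx), ← add_assoc]
      exact add_le_add_left h1 _
    · rw [Set.indicator_of_notMem (by exact hx), add_zero]
      calc ∫⁻ e, f ((y, x + e), x') ∂ν ≤ ∫⁻ e, 1 ∂ν := lintegral_mono fun e => hf1 _
        _ = 1 := by simp
        _ ≤ ENNReal.ofReal δ + 1 := le_add_self
        _ ≤ _ := le_add_self
  have main : A + A ≤ G + (ENNReal.ofReal δ + 1) := by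
    have e1 : A + A = ∫⁻ y, ∫⁻ x, (∫⁻ x', ∫⁻ e, f ((y, x + e), x') ∂ν ∂(κ y) + k (y, x)) ∂(κ y) ∂PY := by
      nth_rewrite 1 [hA, hA2]
      rw [hB, ← lintegral_add_right _ hk.lintegral_kernel_prod_right']
      refine lintegral_congr fun y => ?_
      rw [lintegral_add_right _ (by fun_prop)]
    have e2 : G + (ENNReal.ofReal δ + 1) = ∫⁻ y, ∫⁻ x,
        (∫⁻ x', ∫⁻ e, f ((y, x' + e), x') ∂ν ∂(κ y) + (ENNReal.ofReal δ + 1)) ∂(κ y) ∂PY := by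
      have hc : ENNReal.ofReal δ + 1 = ∫⁻ y, (ENNReal.ofReal δ + 1) ∂PY := by simp
      rw [hG]
      nth_rewrite 1 [hc]
      rw [← lintegral_add_right _ measurable_const]
      refine lintegral_congr fun y => ?_
      rw [lintegral_add_right _ measurable_const]; simp
    rw [e1, e2]
    exact lintegral_mono fun y => lintegral_mono fun x => pt y x
  have hG1 : G ≤ 1 := by
    calc G ≤ ∫⁻ ω, 1 ∂ℙ := lintegral_mono fun ω => hf1 _
      _ = 1 := by simp
  have hGt : G ≠ ∞ := (hG1.trans_lt ENNReal.one_lt_top).ne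
  rw [ENNReal.ofReal_le_iff_le_toReal hGt]
  have h3 := (add_le_add h h).trans main
  rw [← ENNReal.ofReal_add (by linarith) (by linarith), ← ENNReal.ofReal_toReal hGt,
    ← ENNReal.ofReal_one, ← ENNReal.ofReal_add hδ0.le zero_le_one,
    ← ENNReal.ofReal_add ENNReal.toReal_nonneg (by linarith),
    ENNReal.ofReal_le_ofReal_iff (add_nonneg ENNReal.toReal_nonneg (by linarith))] at h3
  linarith
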